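/- arXiv:1607.02753 — 2 statements merged into one kernel-verified Lean document; each statement's English description precedes it below -/
import Mathlib

section
/- Let n ≥ 1, let k ≥ 2 be an integer and α ∈ [0,1]. Let f, g : ℝⁿ → [0,∞) be convex functions that are C² on a neighborhood of 0 with f(0) = 0 = g(0); for x ∈ ℝⁿ let σ_x(y) = f(y) + g(x − y), and assume Hess σ₀|_{y=0} is positive definite. If in addition f and g are C^{k,α} near 0, then every map μ that is C¹ on a neighborhood U of 0 with μ(0) = 0 and such that μ(x) is the unique global minimizer of σ_x for each x ∈ U, is C^{k−1,α} near 0, and the infimal convolution h = f □ g is C^{k,α} near 0. -/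
open Set Filter Topology

noncomputable section

/-- `f` is `C^{k,α}` near `x₀`: on some open neighborhood of `x₀` it is `C^k` and its
`k`-th derivative is `α`-Hölder continuous there (for `α = 0` this is boundedness of the
`k`-th derivative, which together with `ContDiffOn` amounts to mere continuity;
for `α = 1` it is the Lipschitz condition). -/
def CkAlphaNear {E F : Type*} [NormedAddCommGroup E] [NormedSpace ℝ E]
    [NormedAddCommGroup F] [NormedSpace ℝ F]
    (k : ℕ) (α : ℝ) (f : E → F) (x₀ : E) : Prop :=
  ∃ U : Set E, IsOpen U ∧ x₀ ∈ U ∧ ContDiffOn ℝ k f U ∧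
    ∃ C : ℝ, ∀ y ∈ U, ∀ z ∈ U,
      ‖iteratedFDeriv ℝ k f y - iteratedFDeriv ℝ k f z‖ ≤ C * ‖y - z‖ ^ α

/-- The infimal convolution `(f □ g)(x) = ⨅ y, f y + g (x - y)`. -/
def infConv {E : Type*} [NormedAddCommGroup E] (f g : E → ℝ) (x : E) : ℝ :=
  ⨅ y : E, (f y + g (x - y))

open Asymptotics

section HolderCalculus

variable {E F G : Type*} [NormedAddCommGroup E] [NormedSpace ℝ E]
  [NormedAddCommGroup F] [NormedSpace ℝ F] [NormedAddCommGroup G] [NormedSpace ℝ G]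

/-- Filter reformulation of `CkAlphaNear`. -/
structure HolderAt (k : ℕ) (α : ℝ) (f : E → F) (x : E) : Prop where
  contDiffAt : ContDiffAt ℝ k f x
  isBigO : (fun p : E × E => iteratedFDeriv ℝ k f p.1 - iteratedFDeriv ℝ k f p.2)
    =O[𝓝 (x, x)] (fun p : E × E => ‖p.1 - p.2‖ ^ α)

theorem CkAlphaNear.holderAt {k : ℕ} {α : ℝ} {f : E → F} {x : E} (h : CkAlphaNear k α f x) :
    HolderAt k α f x := by
  obtain ⟨U, hU, hx, hc, C, hC⟩ := h
  have hn : U ∈ 𝓝 x := hU.mem_nhds hx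
  refine ⟨hc.contDiffAt hn, .of_bound C ?_⟩
  filter_upwards [prod_mem_nhds hn hn] with p hp
  rw [Real.norm_of_nonneg (by positivity)]
  exact hC _ hp.1 _ hp.2

theorem HolderAt.ckAlphaNear {k : ℕ} {α : ℝ} {f : E → F} {x : E} (h : HolderAt k α f x) :
    CkAlphaNear k α f x := by
  obtain ⟨C, hC⟩ := h.isBigO.bound
  rw [nhds_prod_eq] at hC
  obtain ⟨t, ht, hC⟩ := eventually_prod_self_iff'.1 hC
  have h1 : ∀ᶠ y in 𝓝 x, ContDiffAt ℝ k f y := h.contDiffAt.eventually (by simp)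
  have h2 : ∀ᶠ y in 𝓝 x, y ∈ t ∧ ContDiffAt ℝ k f y := h1.and ht |>.mono fun y hy => hy.symm
  obtain ⟨U, hUs, hU, hx⟩ := eventually_nhds_iff.1 h2
  refine ⟨U, hU, hx, fun y hy => (hUs y hy).2.contDiffWithinAt, C, fun y hy z hz => ?_⟩
  have h3 := hC y (hUs y hy).1 z (hUs z hz).1
  rwa [Real.norm_of_nonneg (by positivity)] at h3

theorem HolderAt.eventually_differentiableAt {m : ℕ} {α : ℝ} (hm : m ≠ 0) {f : E → F} {x : E}
    (h : HolderAt m α f x) : ∀ᶠ y in 𝓝 x, DifferentiableAt ℝ f y := by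
  have h1 : ∀ᶠ y in 𝓝 x, ContDiffAt ℝ m f y := h.contDiffAt.eventually (by simp)
  exact h1.mono fun y hy => hy.differentiableAt (by exact_mod_cast hm)

theorem ContDiffAt.holderAt {k : ℕ} {α : ℝ} (hα : α ≤ 1) {f : E → F} {x : E} {n : WithTop ℕ∞}
    (h : ContDiffAt ℝ n f x) (hk : (k : WithTop ℕ∞) + 1 ≤ n) : HolderAt k α f x := by
  refine ⟨h.of_le (le_self_add.trans hk), ?_⟩
  have h1 : ContDiffAt ℝ 1 (iteratedFDeriv ℝ k f) x :=
    h.iteratedFDeriv_right (by rwa [add_comm])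
  refine (h1.hasStrictFDerivAt one_ne_zero).isBigO_sub.trans ?_
  refine .of_norm_left ?_
  refine IsBigO.comp_tendsto (.id_rpow_of_le_one hα) (k := fun p : E × E => ‖p.1 - p.2‖) ?_
  refine tendsto_nhdsWithin_iff.2 ⟨?_, .of_forall fun _ => norm_nonneg _⟩
  have : Continuous fun p : E × E => ‖p.1 - p.2‖ := by fun_prop
  simpa using this.tendsto (x, x)

theorem HolderAt.of_le {k l : ℕ} {α : ℝ} (hα : α ≤ 1) {f : E → F} {x : E}
    (h : HolderAt k α f x) (hl : l ≤ k) : HolderAt l α f x := by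
  rcases hl.eq_or_lt with rfl | hl
  · exact h
  · exact h.contDiffAt.holderAt hα (by exact_mod_cast hl)

theorem HolderAt.fderiv {k : ℕ} {α : ℝ} {f : E → F} {x : E}
    (h : HolderAt (k + 1) α f x) : HolderAt k α (fderiv ℝ f) x := by
  refine ⟨h.contDiffAt.fderiv_right (by simp), .of_norm_left ?_⟩
  simpa [iteratedFDeriv_succ_eq_comp_right, Function.comp_def, ← dist_eq_norm_sub]
    using h.isBigO.norm_left

theorem HolderAt.of_fderiv {k : ℕ} {α : ℝ} {f : E → F} {x : E}
    (hf : ∀ᶠ y in 𝓝 x, DifferentiableAt ℝ f y)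
    (h : HolderAt k α (_root_.fderiv ℝ f) x) : HolderAt (k + 1) α f x := by
  refine ⟨?_, .of_norm_left ?_⟩
  · push_cast
    refine contDiffAt_succ_iff_hasFDerivAt.2 ⟨_, ?_, h.contDiffAt⟩
    exact ⟨_, hf, fun y hy => DifferentiableAt.hasFDerivAt hy⟩
  · simpa [iteratedFDeriv_succ_eq_comp_right, Function.comp_def, ← dist_eq_norm_sub]
      using h.isBigO.norm_left

theorem HolderAt.congr {k : ℕ} {α : ℝ} {f g : E → F} {x : E}
    (h : HolderAt k α f x) (hfg : f =ᶠ[𝓝 x] g) : HolderAt k α g x := by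
  refine ⟨h.contDiffAt.congr_of_eventuallyEq hfg.symm, ?_⟩
  refine EventuallyEq.trans_isBigO ?_ h.isBigO
  have h1 := hfg.symm.iteratedFDeriv ℝ k
  rw [nhds_prod_eq]
  filter_upwards [h1.prod_mk h1] with p hp
  simp [hp.1, hp.2]

theorem HolderAt.prodMk {k : ℕ} {α : ℝ} {f : E → F} {g : E → G} {x : E}
    (hf : HolderAt k α f x) (hg : HolderAt k α g x) :
    HolderAt k α (fun x ↦ (f x, g x)) x where
  contDiffAt := hf.contDiffAt.prodMk hg.contDiffAt
  isBigO := calc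
    _ =ᶠ[𝓝 (x, x)] (fun p ↦ (iteratedFDeriv ℝ k f p.1 - iteratedFDeriv ℝ k f p.2).prod
                (iteratedFDeriv ℝ k g p.1 - iteratedFDeriv ℝ k g p.2)) := by
      have h1 := (hf.contDiffAt.eventually (by simp)).and (hg.contDiffAt.eventually (by simp))
      rw [nhds_prod_eq]
      filter_upwards [h1.prod_mk h1] with p hp
      apply DFunLike.ext
      rw [iteratedFDeriv_prodMk _ _ le_rfl, iteratedFDeriv_prodMk _ _ le_rfl] <;>
        simp [hp.1.1, hp.1.2, hp.2.1, hp.2.2]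
    _ =O[𝓝 (x, x)] fun p ↦ ‖p.1 - p.2‖ ^ α := by
      refine .of_norm_left ?_
      simp only [ContinuousMultilinearMap.opNorm_prod, ← Prod.norm_mk]
      exact (hf.isBigO.prod_left hg.isBigO).norm_left

theorem HolderAt.comp {k : ℕ} {α : ℝ} (h0 : 0 ≤ α) (h1 : α ≤ 1) {g : F → G} {f : E → F} {x : E}
    (hg : HolderAt k α g (f x)) (hf : HolderAt k α f x)
    (hd : ContDiffAt ℝ 1 g (f x) ∨ ContDiffAt ℝ 1 f x) :
    HolderAt k α (fun y => g (f y)) x where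
  contDiffAt := hg.contDiffAt.comp x hf.contDiffAt
  isBigO := by
    have T1 : Tendsto (fun p : E × E => p.1) (𝓝 (x, x)) (𝓝 x) := continuous_fst.tendsto _
    have T2 : Tendsto (fun p : E × E => p.2) (𝓝 (x, x)) (𝓝 x) := continuous_snd.tendsto _
    have hfc := hf.contDiffAt.continuousAt
    have T : Tendsto (fun p : E × E => (f p.1, f p.2)) (𝓝 (x, x)) (𝓝 (f x, f x)) := by
      rw [nhds_prod_eq (x := f x)]
      exact (hfc.tendsto.comp T1).prodMk (hfc.tendsto.comp T2)
    have e : (fun p : E × E => iteratedFDeriv ℝ k (g ∘ f) p.1 - iteratedFDeriv ℝ k (g ∘ f) p.2)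
      =ᶠ[𝓝 (x, x)] fun p ↦ (ftaylorSeries ℝ g (f p.1)).taylorComp (ftaylorSeries ℝ f p.1) k -
        (ftaylorSeries ℝ g (f p.2)).taylorComp (ftaylorSeries ℝ f p.2) k := by
      have A := (hf.contDiffAt.eventually (by simp)).and
        (hfc.eventually (hg.contDiffAt.eventually (by simp)))
      filter_upwards [T1.eventually A, T2.eventually A] with p hp1 hp2
      rw [iteratedFDeriv_comp hp1.2 hp1.1 le_rfl, iteratedFDeriv_comp hp2.2 hp2.1 le_rfl]
    refine e.trans_isBigO ?_
    apply FormalMultilinearSeries.taylorComp_sub_taylorComp_isBigO <;> intro i hi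
    · exact (((hg.contDiffAt.continuousAt_iteratedFDeriv (mod_cast hi)).comp hfc).tendsto.comp T1)
          |>.norm.isBoundedUnder_le
    · by_cases hfd : ContDiffAt ℝ 1 f x
      · refine ((hg.of_le h1 hi).isBigO.comp_tendsto T).trans ?_
        refine .rpow h0 (.of_forall fun _ ↦ norm_nonneg _) <| .norm_norm ?_
        exact (hfd.hasStrictFDerivAt one_ne_zero).isBigO_sub
      · obtain rfl : k = 0 := by
          contrapose! hfd
          exact hf.contDiffAt.of_le (by exact_mod_cast Nat.one_le_iff_ne_zero.2 hfd)
        obtain rfl : i = 0 := by rwa [nonpos_iff_eq_zero] at hi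
        refine .of_norm_left ?_
        simp only [ftaylorSeries, iteratedFDeriv_zero_eq_comp, Function.comp_apply, ← map_sub,
          LinearIsometryEquiv.norm_map, isBigO_norm_left]
        refine (((hd.resolve_right hfd).hasStrictFDerivAt one_ne_zero).isBigO_sub.comp_tendsto
          T).trans ?_
        have := hf.isBigO.norm_left
        simp only [iteratedFDeriv_zero_eq_comp, Function.comp_apply, ← map_sub,
          LinearIsometryEquiv.norm_map, isBigO_norm_left] at this
        exact this
    · exact ((hf.contDiffAt.continuousAt_iteratedFDeriv (mod_cast hi)).tendsto.comp T1)
          |>.norm.isBoundedUnder_le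
    · exact ((hf.contDiffAt.continuousAt_iteratedFDeriv (mod_cast hi)).tendsto.comp T2)
          |>.norm.isBoundedUnder_le
    · exact (hf.of_le h1 hi).isBigO

end HolderCalculus
section Main

variable {E : Type*} [NormedAddCommGroup E] [NormedSpace ℝ E]

theorem ConvexOn.min_of_hasFDerivAt_zero {φ : E → ℝ} (h : ConvexOn ℝ Set.univ φ) {y : E}
    (hy : HasFDerivAt φ (0 : E →L[ℝ] ℝ) y) (z : E) : φ y ≤ φ z := by
  let L : ℝ →ᵃ[ℝ] E := AffineMap.lineMap y z
  have hc : ConvexOn ℝ Set.univ (φ ∘ L) := by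
    simpa using h.comp_affineMap L
  have hL : HasDerivAt (fun t : ℝ => L t) (z - y) 0 := by
    simpa [L] using AffineMap.hasDerivAt_lineMap (a := y) (b := z) (x := (0 : ℝ))
  have hd : HasDerivAt (φ ∘ L) 0 0 := by
    have hy' : HasFDerivAt φ (0 : E →L[ℝ] ℝ) (L 0) := by simpa [L] using hy
    simpa using hy'.comp_hasDerivAt (0 : ℝ) hL
  have := hc.le_slope_of_hasDerivAt (Set.mem_univ 0) (Set.mem_univ 1) one_pos hd
  simpa [slope, L] using this

theorem isInvertible_of_pos [FiniteDimensional ℝ E] (A : E →L[ℝ] E →L[ℝ] ℝ)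
    (hA : ∀ v, v ≠ 0 → 0 < A v v) : A.IsInvertible := by
  have hinj : Function.Injective (A : E →ₗ[ℝ] E →L[ℝ] ℝ) := by
    rw [← LinearMap.ker_eq_bot, LinearMap.ker_eq_bot']
    intro v hv
    by_contra hne
    have h1 := hA v hne
    have h2 : A v = 0 := hv
    simp [h2] at h1
  have hfr : Module.finrank ℝ E = Module.finrank ℝ (E →L[ℝ] ℝ) := by
    rw [← (LinearMap.toContinuousLinearMap : (E →ₗ[ℝ] ℝ) ≃ₗ[ℝ] (E →L[ℝ] ℝ)).finrank_eq]
    exact Subspace.dual_finrank_eq.symm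
  refine ⟨(LinearEquiv.ofInjectiveOfFinrankEq _ hinj hfr).toContinuousLinearEquiv, ?_⟩
  ext v w
  rfl

/-- Critical points of `σ_x` are minimizers. -/
theorem sigma_min {f g : E → ℝ} (hf : ConvexOn ℝ Set.univ f) (hg : ConvexOn ℝ Set.univ g)
    {x y : E} (hfd : DifferentiableAt ℝ f y) (hgd : DifferentiableAt ℝ g (x - y))
    (he : fderiv ℝ f y = fderiv ℝ g (x - y)) (z : E) :
    f y + g (x - y) ≤ f z + g (x - z) := by
  have hc : ConvexOn ℝ Set.univ (fun z => f z + g (x - z)) := by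
    refine hf.add ?_
    have := hg.comp_affineMap (AffineMap.const ℝ E x - AffineMap.id ℝ E)
    simpa [Function.comp_def] using this
  refine hc.min_of_hasFDerivAt_zero (y := y) ?_ z
  have h1 : HasFDerivAt (fun z => x - z) (-ContinuousLinearMap.id ℝ E) y :=
    (hasFDerivAt_id y).const_sub x
  have h2 := hfd.hasFDerivAt.add (hgd.hasFDerivAt.comp y h1)
  refine HasFDerivAt.congr_fderiv (show HasFDerivAt (fun z => f z + g (x - z)) _ y from h2) ?_
  ext v
  simp [he]

theorem main_aux [FiniteDimensional ℝ E] (j : ℕ) (α : ℝ) (h0 : 0 ≤ α) (h1 : α ≤ 1)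
    (f g : E → ℝ) (hfnn : ∀ x, 0 ≤ f x) (hgnn : ∀ x, 0 ≤ g x)
    (hfconv : ConvexOn ℝ Set.univ f) (hgconv : ConvexOn ℝ Set.univ g)
    (hf0 : f 0 = 0) (hg0 : g 0 = 0)
    (hσpos : ∀ v : E, v ≠ 0 →
      0 < iteratedFDeriv ℝ 2 (fun y => f y + g (0 - y)) 0 ![v, v])
    (hf : HolderAt (j + 2) α f 0) (hg : HolderAt (j + 2) α g 0) :
    ∃ ψ : E → E, HolderAt (j + 1) α ψ 0 ∧
      (∀ᶠ x in 𝓝 0, ∀ z, f (ψ x) + g (x - ψ x) ≤ f z + g (x - z)) ∧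
      HolderAt (j + 2) α (fun x => f (ψ x) + g (x - ψ x)) 0 := by
  have hcomp : CompleteSpace E := FiniteDimensional.complete ℝ E
  have hf' : HolderAt (j + 1) α (fderiv ℝ f) 0 := hf.fderiv
  have hg' : HolderAt (j + 1) α (fderiv ℝ g) 0 := hg.fderiv
  have hf'' : HolderAt j α (fderiv ℝ (fderiv ℝ f)) 0 := hf'.fderiv
  have hg'' : HolderAt j α (fderiv ℝ (fderiv ℝ g)) 0 := hg'.fderiv
  have f'0 : fderiv ℝ f 0 = 0 :=
    IsLocalMin.fderiv_eq_zero (Filter.Eventually.of_forall fun x => by simpa [hf0] using hfnn x)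
  have g'0 : fderiv ℝ g 0 = 0 :=
    IsLocalMin.fderiv_eq_zero (Filter.Eventually.of_forall fun x => by simpa [hg0] using hgnn x)
  have fd : ∀ᶠ y in 𝓝 (0 : E), DifferentiableAt ℝ f y :=
    hf.eventually_differentiableAt (Nat.succ_ne_zero _)
  have gd : ∀ᶠ y in 𝓝 (0 : E), DifferentiableAt ℝ g y :=
    hg.eventually_differentiableAt (Nat.succ_ne_zero _)
  have fdd : ∀ᶠ y in 𝓝 (0 : E), DifferentiableAt ℝ (fderiv ℝ f) y := by
    filter_upwards [hf'.contDiffAt.eventually (by simp)] with y hy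
    exact hy.differentiableAt (by simp)
  have gdd : ∀ᶠ y in 𝓝 (0 : E), DifferentiableAt ℝ (fderiv ℝ g) y := by
    filter_upwards [hg'.contDiffAt.eventually (by simp)] with y hy
    exact hy.differentiableAt (by simp)
  -- the Hessian
  set A0 : E →L[ℝ] E →L[ℝ] ℝ := fderiv ℝ (fderiv ℝ f) 0 + fderiv ℝ (fderiv ℝ g) 0 with hA0
  have hneg : Tendsto (fun y : E => 0 - y) (𝓝 0) (𝓝 0) := by
    have : Continuous fun y : E => 0 - y := by fun_prop
    simpa using this.tendsto 0
  have hApos : ∀ v, v ≠ 0 → 0 < A0 v v := by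
    intro v hv
    have := hσpos v hv
    rw [iteratedFDeriv_two_apply] at this
    have e1 : fderiv ℝ (fun y => f y + g (0 - y)) =ᶠ[𝓝 0]
        fun y => fderiv ℝ f y - fderiv ℝ g (0 - y) := by
      filter_upwards [fd, hneg.eventually gd] with y hy1 hy2
      have h1 : HasFDerivAt (fun z => 0 - z) (-ContinuousLinearMap.id ℝ E) y :=
        (hasFDerivAt_id y).const_sub 0
      have h2 := hy1.hasFDerivAt.add (hy2.hasFDerivAt.comp y h1)
      refine HasFDerivAt.fderiv ?_
      refine HasFDerivAt.congr_fderiv (show HasFDerivAt (fun z => f z + g (0 - z)) _ y from h2) ?_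
      ext v
      simp [sub_eq_add_neg]
    have e2 : HasFDerivAt (fun y => fderiv ℝ f y - fderiv ℝ g (0 - y)) A0 0 := by
      have h1 : HasFDerivAt (fun z => 0 - z) (-ContinuousLinearMap.id ℝ E) 0 :=
        (hasFDerivAt_id (0 : E)).const_sub 0
      have hgz : DifferentiableAt ℝ (fderiv ℝ g) (0 - 0) := by simpa using gdd.self_of_nhds
      have h2 := fdd.self_of_nhds.hasFDerivAt.sub (hgz.hasFDerivAt.comp 0 h1)
      refine HasFDerivAt.congr_fderiv
        (show HasFDerivAt (fun y => fderiv ℝ f y - fderiv ℝ g (0 - y)) _ 0 from h2) ?_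
      ext v w
      simp [hA0]
    rw [e1.fderiv_eq, e2.fderiv] at this
    simpa using this
  have hAinv : A0.IsInvertible := isInvertible_of_pos A0 hApos
  -- implicit function
  let Φ : E × E → (E →L[ℝ] ℝ) := fun p => fderiv ℝ f p.2 - fderiv ℝ g (p.1 - p.2)
  have hΦc : ContDiffAt ℝ ((j + 1 : ℕ) : WithTop ℕ∞) Φ (0, 0) := by
    refine ContDiffAt.sub ?_ ?_
    · exact ContDiffAt.comp (0, 0) (g := fderiv ℝ f) (f := Prod.snd) hf'.contDiffAt contDiffAt_snd
    · refine ContDiffAt.comp (0, 0) (g := fderiv ℝ g) (f := fun p : E × E => p.1 - p.2) ?_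
        (contDiffAt_fst.sub contDiffAt_snd)
      simpa using hg'.contDiffAt
  have hΦd : fderiv ℝ Φ (0, 0) ∘L ContinuousLinearMap.inr ℝ E E = A0 := by
    have hgz : DifferentiableAt ℝ (fderiv ℝ g) (((0, 0) : E × E).1 - ((0, 0) : E × E).2) := by
      simpa using gdd.self_of_nhds
    have k1 : HasFDerivAt (fun p : E × E => p.1 - p.2)
      (ContinuousLinearMap.fst ℝ E E - ContinuousLinearMap.snd ℝ E E) (0, 0) :=
      hasFDerivAt_fst.sub hasFDerivAt_snd
    have hfz : DifferentiableAt ℝ (fderiv ℝ f) (((0, 0) : E × E).2) := fdd.self_of_nhds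
    have k2 : HasFDerivAt (fun p : E × E => fderiv ℝ f p.2) _ (0, 0) :=
      hfz.hasFDerivAt.comp (0, 0) hasFDerivAt_snd
    have k3 : HasFDerivAt (fun p : E × E => fderiv ℝ g (p.1 - p.2)) _ (0, 0) :=
      hgz.hasFDerivAt.comp (0, 0) k1
    have k4 : HasFDerivAt Φ _ (0, 0) := k2.sub k3
    rw [k4.fderiv]
    ext v w
    simp [hA0]
  have hne : ((j + 1 : ℕ) : WithTop ℕ∞) ≠ 0 := by exact_mod_cast Nat.succ_ne_zero j
  have hinv : (fderiv ℝ Φ (0, 0) ∘L ContinuousLinearMap.inr ℝ E E).IsInvertible := by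
    rw [hΦd]; exact hAinv
  obtain ⟨ψ, ψ0, ψeq, ψc⟩ : ∃ ψ : E → E, ψ 0 = 0 ∧ (∀ᶠ x in 𝓝 0, Φ (x, ψ x) = 0) ∧
      ContDiffAt ℝ ((j + 1 : ℕ) : WithTop ℕ∞) ψ 0 := by
    refine ⟨hΦc.implicitFunction hne hinv, hΦc.implicitFunction_apply_self hne hinv, ?_,
      hΦc.contDiffAt_implicitFunction hne hinv⟩
    have := hΦc.eventually_apply_implicitFunction hne hinv
    simpa [Φ, f'0, g'0] using this
  have ψd : ∀ᶠ y in 𝓝 (0 : E), DifferentiableAt ℝ ψ y := by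
    filter_upwards [ψc.eventually (by simp)] with y hy
    exact hy.differentiableAt hne
  have Tψ : Tendsto ψ (𝓝 0) (𝓝 0) := by simpa [ψ0] using ψc.continuousAt.tendsto
  have Tξ : Tendsto (fun x => x - ψ x) (𝓝 0) (𝓝 0) := by simpa using tendsto_id.sub Tψ
  have ξc : ContDiffAt ℝ ((j + 1 : ℕ) : WithTop ℕ∞) (fun x => x - ψ x) 0 := contDiffAt_id.sub ψc
  have h1le : (1 : WithTop ℕ∞) ≤ ((j + 1 : ℕ) : WithTop ℕ∞) := by
    exact_mod_cast Nat.succ_le_succ (Nat.zero_le j)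
  have ψj : HolderAt j α ψ 0 := ψc.holderAt h1 (by simp)
  have ξj : HolderAt j α (fun x => x - ψ x) 0 := ξc.holderAt h1 (by simp)
  -- second derivatives along ψ
  have F2 : HolderAt j α (fun x => fderiv ℝ (fderiv ℝ f) (ψ x)) 0 :=
    HolderAt.comp h0 h1 (g := fderiv ℝ (fderiv ℝ f)) (by simpa [ψ0] using hf'') ψj
      (.inr (ψc.of_le h1le))
  have G2 : HolderAt j α (fun x => fderiv ℝ (fderiv ℝ g) (x - ψ x)) 0 :=
    HolderAt.comp h0 h1 (g := fderiv ℝ (fderiv ℝ g)) (f := fun x => x - ψ x)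
      (by simpa [ψ0] using hg'') ξj (.inr (ξc.of_le h1le))
  let B : E → E →L[ℝ] E →L[ℝ] ℝ := fun x =>
    fderiv ℝ (fderiv ℝ f) (ψ x) + fderiv ℝ (fderiv ℝ g) (x - ψ x)
  have hB0 : B 0 = A0 := by simp [B, hA0, ψ0]
  have hBcont : ContinuousAt B 0 :=
    F2.contDiffAt.continuousAt.add G2.contDiffAt.continuousAt
  have hBinv : ∀ᶠ x in 𝓝 0, (B x).IsInvertible := by
    obtain ⟨e, he⟩ := hAinv
    have : Set.range ((↑) : (E ≃L[ℝ] (E →L[ℝ] ℝ)) → E →L[ℝ] E →L[ℝ] ℝ) ∈ 𝓝 (B 0) := by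
      rw [hB0, ← he]; exact ContinuousLinearEquiv.nhds e
    exact hBcont this
  have hψ' : fderiv ℝ ψ =ᶠ[𝓝 0]
      fun x => (B x).inverse ∘L (fderiv ℝ (fderiv ℝ g) (x - ψ x)) := by
    filter_upwards [ψeq.eventually_nhds, ψd, hBinv, Tψ.eventually fdd, Tξ.eventually gdd]
      with x hx hd hi hf2 hg2
    have k1 : HasFDerivAt (fun x => x - ψ x) (ContinuousLinearMap.id ℝ E - fderiv ℝ ψ x) x :=
      (hasFDerivAt_id x).sub hd.hasFDerivAt
    have k2 : HasFDerivAt (fun x => fderiv ℝ f (ψ x)) _ x := hf2.hasFDerivAt.comp x hd.hasFDerivAt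
    have k3 : HasFDerivAt (fun x => fderiv ℝ g (x - ψ x)) _ x := hg2.hasFDerivAt.comp x k1
    have k4 : HasFDerivAt (fun x => Φ (x, ψ x)) _ x := k2.sub k3
    have k5 : HasFDerivAt (fun x => Φ (x, ψ x)) (0 : E →L[ℝ] (E →L[ℝ] ℝ)) x :=
      (hasFDerivAt_const (0 : E →L[ℝ] ℝ) x).congr_of_eventuallyEq hx
    have k6 := k4.unique k5
    have k7 : B x ∘L fderiv ℝ ψ x = fderiv ℝ (fderiv ℝ g) (x - ψ x) := by
      rw [ContinuousLinearMap.comp_sub, sub_sub_eq_add_sub, sub_eq_zero] at k6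
      rw [ContinuousLinearMap.add_comp, k6]
      exact ContinuousLinearMap.comp_id _
    rw [← k7, ← ContinuousLinearMap.comp_assoc, hi.inverse_comp_self]
    exact (ContinuousLinearMap.id_comp _).symm
  have ψH : HolderAt (j + 1) α ψ 0 := by
    refine HolderAt.of_fderiv ψd (HolderAt.congr ?_ hψ'.symm)
    let Q : (E →L[ℝ] E →L[ℝ] ℝ) × (E →L[ℝ] E →L[ℝ] ℝ) → E →L[ℝ] E :=
      fun p => (p.1 + p.2).inverse ∘L p.2
    have hQ : ∀ m : ℕ, ContDiffAt ℝ m Q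
        (fderiv ℝ (fderiv ℝ f) (ψ 0), fderiv ℝ (fderiv ℝ g) (0 - ψ 0)) := by
      intro m
      refine ContDiffAt.clm_comp ?_ contDiffAt_snd
      refine ContDiffAt.comp _ (g := ContinuousLinearMap.inverse)
        (f := fun p : (E →L[ℝ] E →L[ℝ] ℝ) × (E →L[ℝ] E →L[ℝ] ℝ) => p.1 + p.2) ?_
        (contDiffAt_fst.add contDiffAt_snd)
      refine ContinuousLinearMap.IsInvertible.contDiffAt_map_inverse ?_
      simpa [ψ0] using hAinv
    exact HolderAt.comp h0 h1 (g := Q)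
      (f := fun x => (fderiv ℝ (fderiv ℝ f) (ψ x), fderiv ℝ (fderiv ℝ g) (x - ψ x)))
      ((hQ (j + 1)).holderAt h1 (by simp)) (F2.prodMk G2) (.inl (hQ 1))
  have ξH : HolderAt (j + 1) α (fun x => x - ψ x) 0 := by
    have hs : ContDiff ℝ ((j + 1 + 1 : ℕ) : WithTop ℕ∞) (fun p : E × E => p.1 - p.2) :=
      contDiff_fst.sub contDiff_snd
    have hid : HolderAt (j + 1) α (fun x : E => x) 0 :=
      ContDiffAt.holderAt h1 (n := ((j + 1 + 1 : ℕ) : WithTop ℕ∞)) contDiffAt_id (by simp)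
    exact HolderAt.comp h0 h1 (g := fun p : E × E => p.1 - p.2) (f := fun x => (x, ψ x))
      (hs.contDiffAt.holderAt h1 (by simp)) (hid.prodMk ψH)
      (.inl (hs.contDiffAt.of_le (by exact_mod_cast Nat.succ_le_succ (Nat.zero_le _))))
  refine ⟨ψ, ψH, ?_, ?_⟩
  · filter_upwards [ψeq, Tψ.eventually fd, Tξ.eventually gd] with x hx hfx hgx
    exact sigma_min hfconv hgconv hfx hgx (sub_eq_zero.1 hx)
  · have key : ∀ᶠ x in 𝓝 0, HasFDerivAt (fun x => f (ψ x) + g (x - ψ x))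
        (fderiv ℝ g (x - ψ x)) x := by
      filter_upwards [ψeq, ψd, Tψ.eventually fd, Tξ.eventually gd] with x hx hd hfx hgx
      have k1 : HasFDerivAt (fun x => x - ψ x) (ContinuousLinearMap.id ℝ E - fderiv ℝ ψ x) x :=
        (hasFDerivAt_id x).sub hd.hasFDerivAt
      have k4 := (hfx.hasFDerivAt.comp x hd.hasFDerivAt).add (hgx.hasFDerivAt.comp x k1)
      have hx' : fderiv ℝ f (ψ x) = fderiv ℝ g (x - ψ x) := sub_eq_zero.1 hx
      refine HasFDerivAt.congr_fderiv
        (show HasFDerivAt (fun x => f (ψ x) + g (x - ψ x)) _ x from k4) ?_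
      ext v
      simp [hx']
    refine HolderAt.of_fderiv (k := j + 1) (key.mono fun x hx => hx.differentiableAt) ?_
    refine HolderAt.congr (f := fun x => fderiv ℝ g (x - ψ x)) ?_
      (key.mono fun x hx => hx.fderiv.symm)
    exact HolderAt.comp h0 h1 (g := fderiv ℝ g) (f := fun x => x - ψ x)
      (by simpa [ψ0] using hg') ξH (.inr (ξc.of_le h1le))

end Main

/-- Lemma 2.1(b) of the paper. -/
theorem stmt1 (n : ℕ) (hn : 1 ≤ n) (k : ℕ) (hk : 2 ≤ k) (α : ℝ) (hα : α ∈ Icc (0:ℝ) 1)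
    (f g : EuclideanSpace ℝ (Fin n) → ℝ)
    (hfnn : ∀ x, 0 ≤ f x) (hgnn : ∀ x, 0 ≤ g x)
    (hfconv : ConvexOn ℝ Set.univ f) (hgconv : ConvexOn ℝ Set.univ g)
    (hfC2 : ∃ V ∈ 𝓝 (0 : EuclideanSpace ℝ (Fin n)), ContDiffOn ℝ 2 f V)
    (hgC2 : ∃ V ∈ 𝓝 (0 : EuclideanSpace ℝ (Fin n)), ContDiffOn ℝ 2 g V)
    (hf0 : f 0 = 0) (hg0 : g 0 = 0)
    (hσpos : ∀ v : EuclideanSpace ℝ (Fin n), v ≠ 0 →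
      0 < iteratedFDeriv ℝ 2 (fun y => f y + g (0 - y)) 0 ![v, v])
    (hfkα : CkAlphaNear k α f 0) (hgkα : CkAlphaNear k α g 0) :
    (∀ U ∈ 𝓝 (0 : EuclideanSpace ℝ (Fin n)),
      ∀ μ : EuclideanSpace ℝ (Fin n) → EuclideanSpace ℝ (Fin n),
        ContDiffOn ℝ 1 μ U → μ 0 = 0 →
        (∀ x ∈ U, ∀ y : EuclideanSpace ℝ (Fin n), y ≠ μ x →
          f (μ x) + g (x - μ x) < f y + g (x - y)) →
        CkAlphaNear (k - 1) α μ 0) ∧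
    CkAlphaNear k α (infConv f g) 0 := by
  obtain ⟨j, rfl⟩ := Nat.exists_eq_add_of_le' hk
  obtain ⟨ψ, hψ, hmin, hH⟩ := main_aux j α hα.1 hα.2 f g hfnn hgnn hfconv hgconv hf0 hg0 hσpos
    hfkα.holderAt hgkα.holderAt
  refine ⟨fun U hU μ _ _ hμ => ?_, ?_⟩
  · refine HolderAt.ckAlphaNear (k := j + 1) (hψ.congr ?_)
    filter_upwards [hU, hmin] with x hx hm
    by_contra hne
    exact absurd (hμ x hx (ψ x) hne) (not_lt.2 (hm (μ x)))
  · refine HolderAt.ckAlphaNear (hH.congr ?_)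
    filter_upwards [hmin] with x hm
    refine le_antisymm (le_ciInf hm) (ciInf_le ⟨0, ?_⟩ (ψ x))
    rintro _ ⟨y, rfl⟩
    exact add_nonneg (hfnn y) (hgnn (x - y))
end
end

section
/- Let J ⊂ ℝ be a compact interval, c an endpoint of J, f ∈ C^∞(J) pliable at c, and φ ∈ (−π/2, π/2) such that f_φ is defined. Then f_φ'' ∈ C^∞(R_φ(J)) is pliable at R_φ(c), and if φ ≠ 0 then f_φ' is not pliable at R_φ(c). -/
open Set Filter Topology

noncomputable section

/-- The `C^r` norm `‖f‖_{C^r(J)} = ∑_{i=0}^{r} max_J |f^{(i)}|` of a function on a set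
`J ⊆ ℝ` (derivatives taken within `J`). -/
def CrNorm (r : ℕ) (f : ℝ → ℝ) (J : Set ℝ) : ℝ :=
  ∑ i ∈ Finset.range (r + 1), ⨆ x : J, |iteratedDerivWithin i f J (x : ℝ)|

/-- The support of `g` relative to the interval `[a,b]`: the closure of the set of points
of `[a,b]` where `g` is nonzero. -/
def suppOn (a b : ℝ) (g : ℝ → ℝ) : Set ℝ :=
  closure {x | x ∈ Set.Icc a b ∧ g x ≠ 0}

/-- The data `(k₀, cs, g)` is a series witnessing that `f` is pliable at the endpoint `c`
of the interval `[a,b]`: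
* `f = Σ_{k ≥ k₀} cs k • g k` pointwise on `[a,b]`;
* the `cs k` are positive and super-exponentially converge to `0`;
* the `g k` are `C^∞` on `[a,b]`, their supports form a locally finite family of compact
  subsets of `[a,b] ∖ {c}`, and for every `r` the `C^r` norms of `g k` grow at most
  exponentially in `k`;
* there is `L > 0` such that whenever `0 < 2ε < b - a`, the set `J_ε` of indices `k ≥ k₀`
  whose support meets `{x ∈ [a,b] : ε ≤ |x - c| ≤ 2ε}` has at most `L` elements, and
  `2^{-kL} ≤ ε` for every `k ∈ J_ε`. -/
structure IsPliableSeries (a b c : ℝ) (f : ℝ → ℝ) (k₀ : ℤ) (cs : ℤ → ℝ)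
    (g : ℤ → ℝ → ℝ) : Prop where
  sum_eq : ∀ x ∈ Set.Icc a b,
    HasSum (fun k : {k : ℤ // k₀ ≤ k} => cs k.val * g k.val x) (f x)
  cs_pos : ∀ k : ℤ, k₀ ≤ k → 0 < cs k
  cs_superexp : ∀ γ : ℝ,
    Tendsto (fun k : ℤ => (2 : ℝ) ^ (γ * (k : ℝ)) * cs k) atTop (𝓝 0)
  g_smooth : ∀ k : ℤ, k₀ ≤ k → ContDiffOn ℝ (⊤ : ℕ∞) (g k) (Set.Icc a b)
  supp_compact : ∀ k : ℤ, k₀ ≤ k → IsCompact (suppOn a b (g k))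
  supp_subset : ∀ k : ℤ, k₀ ≤ k → suppOn a b (g k) ⊆ Set.Icc a b \ {c}
  supp_locFin : ∀ x ∈ Set.Icc a b \ {c}, ∃ U ∈ 𝓝 x,
    {k : ℤ | k₀ ≤ k ∧ (suppOn a b (g k) ∩ U).Nonempty}.Finite
  norm_growth : ∀ r : ℕ, ∃ γ M : ℝ, ∀ k : ℤ, k₀ ≤ k →
    (2 : ℝ) ^ (γ * (k : ℝ)) * CrNorm r (g k) (Set.Icc a b) ≤ M
  index_bound : ∃ L : ℕ, 0 < L ∧ ∀ ε : ℝ, 0 < ε → 2 * ε < b - a →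
    {k : ℤ | k₀ ≤ k ∧ (suppOn a b (g k) ∩
      {x ∈ Set.Icc a b | ε ≤ |x - c| ∧ |x - c| ≤ 2 * ε}).Nonempty}.Finite ∧
    {k : ℤ | k₀ ≤ k ∧ (suppOn a b (g k) ∩
      {x ∈ Set.Icc a b | ε ≤ |x - c| ∧ |x - c| ≤ 2 * ε}).Nonempty}.ncard ≤ L ∧
    ∀ k : ℤ, k₀ ≤ k →
      (suppOn a b (g k) ∩ {x ∈ Set.Icc a b | ε ≤ |x - c| ∧ |x - c| ≤ 2 * ε}).Nonempty →
      (2 : ℝ) ^ (-(k : ℝ) * (L : ℝ)) ≤ ε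

/-- `f` is pliable at the endpoint `c` of `[a,b]`. -/
def Pliable (a b c : ℝ) (f : ℝ → ℝ) : Prop :=
  ∃ (k₀ : ℤ) (cs : ℤ → ℝ) (g : ℤ → ℝ → ℝ), IsPliableSeries a b c f k₀ cs g

lemma pl_hasSum_iff (k₀ : ℤ) (u : ℤ → ℝ) (F : Finset ℤ) (hF : ∀ k ∈ F, k₀ ≤ k)
    (hF' : ∀ k, k₀ ≤ k → k ∉ F → u k = 0) :
    HasSum (fun k : {k : ℤ // k₀ ≤ k} => u k.val) (∑ k ∈ F, u k) := by
  have h1 : HasSum ({k : ℤ | k₀ ≤ k}.indicator u) (∑ k ∈ F, u k) := by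
    have : ∑ k ∈ F, u k = ∑ k ∈ F, {k : ℤ | k₀ ≤ k}.indicator u k := by
      apply Finset.sum_congr rfl
      intro k hk
      rw [Set.indicator_of_mem]
      exact hF k hk
    rw [this]
    apply hasSum_sum_of_ne_finset_zero
    intro k hk
    by_cases hk0 : k₀ ≤ k
    · rw [Set.indicator_of_mem (by exact hk0)]; exact hF' k hk0 hk
    · rw [Set.indicator_of_notMem (by exact hk0)]
  exact (hasSum_subtype_iff_indicator (s := {k : ℤ | k₀ ≤ k}) (f := u)).2 h1

lemma pl_zero_of_notMem {a b x : ℝ} {g : ℝ → ℝ} (hx : x ∈ Icc a b) (h : x ∉ suppOn a b g) :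
    g x = 0 := by
  by_contra hne
  exact h (subset_closure ⟨hx, hne⟩)

lemma pl_supp_subset_Icc (a b : ℝ) (g : ℝ → ℝ) : suppOn a b g ⊆ Icc a b :=
  closure_minimal (fun _ hx => hx.1) isClosed_Icc

lemma pl_supp_compact (a b : ℝ) (g : ℝ → ℝ) : IsCompact (suppOn a b g) :=
  isCompact_Icc.of_isClosed_subset isClosed_closure (pl_supp_subset_Icc a b g)

/-- outside the support, `g` vanishes near `x` within the interval -/
lemma pl_eventually_zero {a b x : ℝ} {g : ℝ → ℝ} (h : x ∉ suppOn a b g) :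
    g =ᶠ[𝓝[Icc a b] x] fun _ => 0 := by
  have : (suppOn a b g)ᶜ ∈ 𝓝 x := (isClosed_closure.isOpen_compl).mem_nhds h
  filter_upwards [mem_nhdsWithin_of_mem_nhds this, self_mem_nhdsWithin] with y hy hyI
  exact pl_zero_of_notMem hyI hy

lemma pl_derivWithin_zero {a b x : ℝ} {g : ℝ → ℝ} (hx : x ∈ Icc a b) (h : x ∉ suppOn a b g) :
    derivWithin g (Icc a b) x = 0 := by
  rw [(pl_eventually_zero h).derivWithin_eq_of_mem hx]
  simp

lemma pl_supp_derivWithin (a b : ℝ) (g : ℝ → ℝ) :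
    suppOn a b (derivWithin g (Icc a b)) ⊆ suppOn a b g := by
  apply closure_minimal _ isClosed_closure
  rintro x ⟨hx, hne⟩
  by_contra h
  exact hne (pl_derivWithin_zero hx h)

lemma pl_value_zero {a b c : ℝ} {f : ℝ → ℝ} (hcI : c ∈ Icc a b) (h : Pliable a b c f) :
    f c = 0 := by
  obtain ⟨k₀, cs, g, h⟩ := h
  have h0 := pl_hasSum_iff k₀ (fun k => cs k * g k c) ∅ (by simp) (by
    intro k hk _
    have : g k c = 0 := pl_zero_of_notMem hcI (fun hm => (h.supp_subset k hk hm).2 rfl)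
    simp [this])
  simpa using (h.sum_eq c hcI).unique h0

lemma pl_smooth_deriv {a b : ℝ} (hab : a < b) {g : ℝ → ℝ}
    (hg : ContDiffOn ℝ (⊤ : ℕ∞) g (Icc a b)) :
    ContDiffOn ℝ (⊤ : ℕ∞) (derivWithin g (Icc a b)) (Icc a b) :=
  hg.derivWithin (uniqueDiffOn_Icc hab) (by simp)

lemma pl_bdd {a b : ℝ} (hab : a < b) {g : ℝ → ℝ}
    (hg : ContDiffOn ℝ (⊤ : ℕ∞) g (Icc a b)) (i : ℕ) :
    BddAbove (range fun x : Icc a b => |iteratedDerivWithin i g (Icc a b) (x : ℝ)|) := by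
  have hc : ContinuousOn (fun x => |iteratedDerivWithin i g (Icc a b) x|) (Icc a b) :=
    (hg.continuousOn_iteratedDerivWithin (m := i) (by exact_mod_cast le_top)
      (uniqueDiffOn_Icc hab)).abs
  have := isCompact_Icc.bddAbove_image hc
  rwa [← Set.range_domRestrict] at this

lemma pl_sup_nonneg (i : ℕ) (g : ℝ → ℝ) (J : Set ℝ) :
    0 ≤ ⨆ x : J, |iteratedDerivWithin i g J (x : ℝ)| :=
  Real.iSup_nonneg fun _ => abs_nonneg _

lemma pl_CrNorm_nonneg (r : ℕ) (g : ℝ → ℝ) (J : Set ℝ) : 0 ≤ CrNorm r g J :=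
  Finset.sum_nonneg fun i _ => pl_sup_nonneg i g J

lemma pl_le_CrNorm {a b : ℝ} (hab : a < b) {g : ℝ → ℝ}
    (hg : ContDiffOn ℝ (⊤ : ℕ∞) g (Icc a b)) {i r : ℕ} (hi : i ≤ r) {x : ℝ} (hx : x ∈ Icc a b) :
    |iteratedDerivWithin i g (Icc a b) x| ≤ CrNorm r g (Icc a b) := by
  refine (le_ciSup (pl_bdd hab hg i) ⟨x, hx⟩).trans ?_
  exact Finset.single_le_sum (f := fun i => ⨆ x : Icc a b, |iteratedDerivWithin i g (Icc a b) (x : ℝ)|)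
    (fun i _ => pl_sup_nonneg i g _) (Finset.mem_range.2 (by omega))

lemma pl_CrNorm_deriv (r : ℕ) (g : ℝ → ℝ) (J : Set ℝ) :
    CrNorm r (derivWithin g J) J ≤ CrNorm (r + 1) g J := by
  unfold CrNorm
  rw [Finset.sum_range_succ' _ (r + 1)]
  have : ∀ i, iteratedDerivWithin i (derivWithin g J) J = iteratedDerivWithin (i + 1) g J :=
    fun i => iteratedDerivWithin_succ'.symm
  simp only [this]
  linarith [pl_sup_nonneg 0 g J]

/-- composition bound -/
lemma pl_comp_bound {a b a' b' : ℝ} (hab : a < b) (hab' : a' < b') {S : ℝ → ℝ}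
    (hS : ContDiffOn ℝ (⊤ : ℕ∞) S (Icc a' b')) (hmaps : MapsTo S (Icc a' b') (Icc a b)) (r : ℕ) :
    ∀ p : ℝ → ℝ, ContDiffOn ℝ (⊤ : ℕ∞) p (Icc a' b') → ∃ C : ℝ, 0 ≤ C ∧ ∀ u : ℝ → ℝ,
      ContDiffOn ℝ (⊤ : ℕ∞) u (Icc a b) → ∀ B : ℝ, 0 ≤ B →
      (∀ i ≤ r, ∀ x ∈ Icc a b, |iteratedDerivWithin i u (Icc a b) x| ≤ B) →
      ∀ y ∈ Icc a' b', |iteratedDerivWithin r (fun y => u (S y) * p y) (Icc a' b') y| ≤ C * B := by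
  induction r with
  | zero =>
    intro p hp
    obtain ⟨C, hC⟩ := isCompact_Icc.exists_bound_of_continuousOn hp.continuousOn
    refine ⟨max C 0, le_max_right _ _, fun u hu B hB hb y hy => ?_⟩
    have h1 := hb 0 le_rfl (S y) (hmaps hy)
    have h2 := hC y hy
    simp only [iteratedDerivWithin_zero] at h1 ⊢
    rw [abs_mul, mul_comm]
    rw [Real.norm_eq_abs] at h2
    exact mul_le_mul (h2.trans (le_max_left _ _)) h1 (abs_nonneg _) (le_max_right _ _)
  | succ r ih =>
    intro p hp
    have hS' := pl_smooth_deriv hab' hS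
    have hp' := pl_smooth_deriv hab' hp
    obtain ⟨C1, hC1, h1⟩ := ih _ (hS'.mul hp)
    obtain ⟨C2, hC2, h2⟩ := ih _ hp'
    refine ⟨C1 + C2, by positivity, fun u hu B hB hb y hy => ?_⟩
    have hu' := pl_smooth_deriv hab hu
    have hE : EqOn (derivWithin (fun y => u (S y) * p y) (Icc a' b'))
        (fun y => derivWithin u (Icc a b) (S y) * (derivWithin S (Icc a' b') y * p y) +
          u (S y) * derivWithin p (Icc a' b') y) (Icc a' b') := by
      intro z hz
      have e1 := ((hu.differentiableOn (by simp)) _ (hmaps hz)).hasDerivWithinAt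
      have e2 := ((hS.differentiableOn (by simp)) _ hz).hasDerivWithinAt
      have e3 := ((hp.differentiableOn (by simp)) _ hz).hasDerivWithinAt
      have e4 := (e1.comp z e2 hmaps).mul e3
      have e5 := e4.derivWithin (uniqueDiffOn_Icc hab' z hz)
      rw [show (fun y => u (S y) * p y) = (u ∘ S) * p from rfl, e5]
      simp only [Function.comp]
      ring
    rw [iteratedDerivWithin_succ', iteratedDerivWithin_congr hE hy]
    have c1 : ContDiffOn ℝ (⊤ : ℕ∞)
        (fun y => derivWithin u (Icc a b) (S y) * (derivWithin S (Icc a' b') y * p y))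
        (Icc a' b') := (hu'.comp hS hmaps).mul (hS'.mul hp)
    have c2 : ContDiffOn ℝ (⊤ : ℕ∞)
        (fun y => u (S y) * derivWithin p (Icc a' b') y)
        (Icc a' b') := (hu.comp hS hmaps).mul hp'
    rw [iteratedDerivWithin_fun_add hy (uniqueDiffOn_Icc hab')
      ((c1 y hy).of_le (by exact_mod_cast le_top)) ((c2 y hy).of_le (by exact_mod_cast le_top))]
    refine (abs_add_le _ _).trans ?_
    rw [add_mul]
    apply add_le_add
    · apply h1 _ hu' B hB _ y hy
      intro i hi x hx
      rw [← iteratedDerivWithin_succ']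
      exact hb (i + 1) (by omega) x hx
    · exact h2 u hu B hB (fun i hi x hx => hb i (by omega) x hx) y hy

lemma pl_CrNorm_comp {a b a' b' : ℝ} (hab : a < b) (hab' : a' < b') {S : ℝ → ℝ}
    (hS : ContDiffOn ℝ (⊤ : ℕ∞) S (Icc a' b')) (hmaps : MapsTo S (Icc a' b') (Icc a b)) (r : ℕ)
    (p : ℝ → ℝ) (hp : ContDiffOn ℝ (⊤ : ℕ∞) p (Icc a' b')) : ∃ C : ℝ, 0 ≤ C ∧ ∀ u : ℝ → ℝ,
      ContDiffOn ℝ (⊤ : ℕ∞) u (Icc a b) →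
      CrNorm r (fun y => u (S y) * p y) (Icc a' b') ≤ C * CrNorm r u (Icc a b) := by
  choose C hC h using fun i => pl_comp_bound hab hab' hS hmaps i p hp
  refine ⟨∑ i ∈ Finset.range (r + 1), C i, Finset.sum_nonneg fun i _ => hC i, fun u hu => ?_⟩
  rw [Finset.sum_mul]
  conv_lhs => unfold CrNorm
  apply Finset.sum_le_sum
  intro i hi
  have hi' : i ≤ r := by have := Finset.mem_range.1 hi; omega
  have : Nonempty (Icc a' b') := ⟨⟨a', le_rfl, hab'.le⟩⟩
  apply ciSup_le
  rintro ⟨y, hy⟩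
  exact h i u hu _ (pl_CrNorm_nonneg _ _ _)
    (fun j hj x hx => pl_le_CrNorm hab hu (hj.trans hi') hx) y hy

/-- A series whose coefficients times norms are bounded by any exponential. -/
lemma pl_superexp_bound {a b c : ℝ} {f : ℝ → ℝ} {k₀ : ℤ} {cs : ℤ → ℝ} {g : ℤ → ℝ → ℝ}
    (h : IsPliableSeries a b c f k₀ cs g) (r : ℕ) (A : ℝ) :
    ∃ C : ℝ, 0 ≤ C ∧ ∀ k, k₀ ≤ k →
      cs k * CrNorm r (g k) (Icc a b) ≤ C * (2 : ℝ) ^ (-(k : ℝ) * A) := by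
  obtain ⟨γ, M, hM⟩ := h.norm_growth r
  have ht := h.cs_superexp (A - γ)
  obtain ⟨k₁, hk₁⟩ := eventually_atTop.1 (ht.eventually (gt_mem_nhds (zero_lt_one' ℝ)))
  obtain ⟨B, hB⟩ : ∃ B : ℝ, ∀ k ∈ Finset.Icc k₀ k₁, (2 : ℝ) ^ ((A - γ) * (k : ℝ)) * cs k ≤ B := by
    obtain ⟨B, hB⟩ := ((Finset.Icc k₀ k₁).image
      (fun k : ℤ => (2 : ℝ) ^ ((A - γ) * (k : ℝ)) * cs k)).bddAbove
    exact ⟨B, fun k hk => hB (Finset.mem_coe.2 (Finset.mem_image_of_mem _ hk))⟩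
  refine ⟨max B 1 * max M 0, by positivity, fun k hk => ?_⟩
  have h1 : (2 : ℝ) ^ ((A - γ) * (k : ℝ)) * cs k ≤ max B 1 := by
    by_cases hkk : k ≤ k₁
    · exact (hB k (Finset.mem_Icc.2 ⟨hk, hkk⟩)).trans (le_max_left _ _)
    · exact (hk₁ k (by omega)).le.trans (le_max_right _ _)
  have h2 := (hM k hk).trans (le_max_left M 0)
  have h3 := mul_le_mul h1 h2 (mul_nonneg (by positivity) (pl_CrNorm_nonneg _ _ _)) (by positivity)
  have h4 : (2 : ℝ) ^ ((A - γ) * (k : ℝ)) * (2 : ℝ) ^ (γ * (k : ℝ)) * (2 : ℝ) ^ (-(k : ℝ) * A) = 1 := by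
    rw [← Real.rpow_add two_pos, ← Real.rpow_add two_pos]
    ring_nf
    simp
  calc cs k * CrNorm r (g k) (Icc a b)
      = ((2 : ℝ) ^ ((A - γ) * (k : ℝ)) * (2 : ℝ) ^ (γ * (k : ℝ)) * (2 : ℝ) ^ (-(k : ℝ) * A)) *
        (cs k * CrNorm r (g k) (Icc a b)) := by rw [h4, one_mul]
    _ = ((2 : ℝ) ^ ((A - γ) * (k : ℝ)) * cs k * ((2 : ℝ) ^ (γ * (k : ℝ)) * CrNorm r (g k) (Icc a b)))
        * (2 : ℝ) ^ (-(k : ℝ) * A) := by ring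
    _ ≤ _ := mul_le_mul_of_nonneg_right h3 (by positivity)

lemma pl_deriv_at_c {a b c : ℝ} (hab : a < b) (hcI : c ∈ Icc a b) {f : ℝ → ℝ} {k₀ : ℤ}
    {cs : ℤ → ℝ} {g : ℤ → ℝ → ℝ} (h : IsPliableSeries a b c f k₀ cs g) :
    derivWithin f (Icc a b) c = 0 := by
  obtain ⟨L, hL, hidx⟩ := h.index_bound
  obtain ⟨C, hC, hb⟩ := pl_superexp_bound h 0 (2 * L)
  have hfc : f c = 0 := pl_value_zero hcI ⟨k₀, cs, g, h⟩
  have key : ∀ x ∈ Icc a b, 2 * |x - c| < b - a → |f x| ≤ (L * C) * |x - c| ^ 2 := by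
    intro x hx hlt
    rcases eq_or_ne x c with rfl | hne
    · simp [hfc]
    have hε : 0 < |x - c| := abs_pos.2 (sub_ne_zero.2 hne)
    obtain ⟨hfin, hcard, hk⟩ := hidx |x - c| hε hlt
    set T := {k : ℤ | k₀ ≤ k ∧ (suppOn a b (g k) ∩
      {y ∈ Set.Icc a b | |x - c| ≤ |y - c| ∧ |y - c| ≤ 2 * |x - c|}).Nonempty} with hT
    have hxm : x ∈ {y ∈ Set.Icc a b | |x - c| ≤ |y - c| ∧ |y - c| ≤ 2 * |x - c|} :=
      ⟨hx, le_rfl, by linarith⟩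
    have hs := pl_hasSum_iff k₀ (fun k => cs k * g k x) hfin.toFinset
      (fun k hk => ((hfin.mem_toFinset).1 hk).1) (by
        intro k hk hkn
        have : g k x = 0 := by
          apply pl_zero_of_notMem hx
          intro hm
          exact hkn ((hfin.mem_toFinset).2 ⟨hk, x, hm, hxm⟩)
        simp [this])
    rw [(h.sum_eq x hx).unique hs]
    refine (Finset.abs_sum_le_sum_abs _ _).trans ?_
    have hterm : ∀ k ∈ hfin.toFinset, |cs k * g k x| ≤ C * |x - c| ^ 2 := by
      intro k hkT
      obtain ⟨hk0, hne'⟩ := (hfin.mem_toFinset).1 hkT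
      rw [abs_mul, abs_of_pos (h.cs_pos k hk0)]
      have h1 : |g k x| ≤ CrNorm 0 (g k) (Icc a b) := by
        have := pl_le_CrNorm hab (h.g_smooth k hk0) (le_refl 0) hx
        simpa using this
      refine (mul_le_mul_of_nonneg_left h1 (h.cs_pos k hk0).le).trans ((hb k hk0).trans ?_)
      apply mul_le_mul_of_nonneg_left _ hC
      have h2 := hk k hk0 hne'
      have h3 : (2 : ℝ) ^ (-(k : ℝ) * (2 * L)) = ((2 : ℝ) ^ (-(k : ℝ) * L)) ^ 2 := by
        rw [← Real.rpow_natCast, ← Real.rpow_mul two_pos.le]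
        congr 1
        push_cast
        ring
      rw [h3]
      exact pow_le_pow_left₀ (by positivity) h2 2
    refine (Finset.sum_le_card_nsmul _ _ _ hterm).trans ?_
    rw [nsmul_eq_mul, mul_assoc, ← Set.ncard_eq_toFinset_card _ hfin]
    apply mul_le_mul_of_nonneg_right _ (by positivity)
    exact_mod_cast hcard
  have hd : HasDerivWithinAt f 0 (Icc a b) c := by
    rw [hasDerivWithinAt_iff_isLittleO]
    simp only [hfc, sub_zero, smul_zero]
    have hO : f =O[𝓝[Icc a b] c] fun x => (x - c) ^ 2 := by
      apply Asymptotics.IsBigO.of_bound (L * C)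
      have : ∀ᶠ x in 𝓝 c, 2 * |x - c| < b - a := by
        have hcont : Continuous fun x => 2 * |x - c| := by fun_prop
        apply hcont.continuousAt.eventually (gt_mem_nhds _)
        simpa using hab
      filter_upwards [mem_nhdsWithin_of_mem_nhds this, self_mem_nhdsWithin] with x hx hxI
      have := key x hxI hx
      rw [Real.norm_eq_abs, Real.norm_eq_abs, abs_pow]
      exact this
    refine hO.trans_isLittleO ?_
    have h2 : (fun x : ℝ => (x - c) ^ 2) =o[𝓝 c] fun x => x - c := by
      have h3 : (fun x : ℝ => x - c) =o[𝓝 c] fun _ => (1 : ℝ) := by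
        rw [Asymptotics.isLittleO_one_iff]
        have : Continuous fun x : ℝ => x - c := by fun_prop
        simpa using this.tendsto c
      have := h3.mul_isBigO (Asymptotics.isBigO_refl (fun x : ℝ => x - c) (𝓝 c))
      simpa [pow_two] using this
    exact h2.mono nhdsWithin_le_nhds
  exact hd.derivWithin (uniqueDiffOn_Icc hab c hcI)

lemma pl_deriv_series {a b c : ℝ} (hab : a < b) (hcI : c ∈ Icc a b) {f : ℝ → ℝ} {k₀ : ℤ}
    {cs : ℤ → ℝ} {g : ℤ → ℝ → ℝ} (h : IsPliableSeries a b c f k₀ cs g) :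
    IsPliableSeries a b c (derivWithin f (Icc a b)) k₀ cs
      (fun k => derivWithin (g k) (Icc a b)) where
  sum_eq := by
    intro x hx
    rcases eq_or_ne x c with rfl | hne
    · rw [pl_deriv_at_c hab hcI h]
      have := pl_hasSum_iff k₀ (fun k => cs k * derivWithin (g k) (Icc a b) x) ∅ (by simp) (by
        intro k hk _
        rw [pl_derivWithin_zero hx (fun hm => (h.supp_subset k hk hm).2 rfl), mul_zero])
      simpa using this
    · obtain ⟨U, hU, hfin⟩ := h.supp_locFin x ⟨hx, hne⟩
      have hxU : x ∈ U := mem_of_mem_nhds hU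
      have hev : f =ᶠ[𝓝[Icc a b] x] fun y => ∑ k ∈ hfin.toFinset, cs k * g k y := by
        filter_upwards [mem_nhdsWithin_of_mem_nhds hU, self_mem_nhdsWithin] with y hyU hyI
        refine (h.sum_eq y hyI).unique (pl_hasSum_iff k₀ (fun k => cs k * g k y) hfin.toFinset
          (fun k hk => ((hfin.mem_toFinset).1 hk).1) ?_)
        intro k hk hkn
        have : g k y = 0 := by
          apply pl_zero_of_notMem hyI
          intro hm
          exact hkn ((hfin.mem_toFinset).2 ⟨hk, y, hm, hyU⟩)
        simp [this]
      have hder : derivWithin f (Icc a b) x =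
          ∑ k ∈ hfin.toFinset, cs k * derivWithin (g k) (Icc a b) x := by
        rw [hev.derivWithin_eq_of_mem hx]
        apply HasDerivWithinAt.derivWithin _ (uniqueDiffOn_Icc hab x hx)
        apply HasDerivWithinAt.fun_sum
        intro k hk
        have hk0 := ((hfin.mem_toFinset).1 hk).1
        exact (((h.g_smooth k hk0).differentiableOn (by simp)) x hx).hasDerivWithinAt.const_mul _
      rw [hder]
      refine pl_hasSum_iff k₀ (fun k => cs k * derivWithin (g k) (Icc a b) x) hfin.toFinset
          (fun k hk => ((hfin.mem_toFinset).1 hk).1) ?_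
      intro k hk hkn
      rw [pl_derivWithin_zero hx, mul_zero]
      intro hm
      exact hkn ((hfin.mem_toFinset).2 ⟨hk, x, hm, hxU⟩)
  cs_pos := h.cs_pos
  cs_superexp := h.cs_superexp
  g_smooth := fun k hk => pl_smooth_deriv hab (h.g_smooth k hk)
  supp_compact := fun k _ => pl_supp_compact a b _
  supp_subset := fun k hk => (pl_supp_derivWithin a b (g k)).trans (h.supp_subset k hk)
  supp_locFin := by
    intro x hx
    obtain ⟨U, hU, hfin⟩ := h.supp_locFin x hx
    refine ⟨U, hU, hfin.subset ?_⟩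
    rintro k ⟨hk, y, hy, hyU⟩
    exact ⟨hk, y, pl_supp_derivWithin a b (g k) hy, hyU⟩
  norm_growth := by
    intro r
    obtain ⟨γ, M, hM⟩ := h.norm_growth (r + 1)
    refine ⟨γ, M, fun k hk => le_trans ?_ (hM k hk)⟩
    exact mul_le_mul_of_nonneg_left (pl_CrNorm_deriv r (g k) _) (by positivity)
  index_bound := by
    obtain ⟨L, hL, hidx⟩ := h.index_bound
    refine ⟨L, hL, fun ε hε hlt => ?_⟩
    obtain ⟨h1, h2, h3⟩ := hidx ε hε hlt
    have hsub : {k : ℤ | k₀ ≤ k ∧ (suppOn a b (derivWithin (g k) (Icc a b)) ∩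
      {x ∈ Set.Icc a b | ε ≤ |x - c| ∧ |x - c| ≤ 2 * ε}).Nonempty} ⊆
      {k : ℤ | k₀ ≤ k ∧ (suppOn a b (g k) ∩
      {x ∈ Set.Icc a b | ε ≤ |x - c| ∧ |x - c| ≤ 2 * ε}).Nonempty} := by
      rintro k ⟨hk, y, hy, hyU⟩
      exact ⟨hk, y, pl_supp_derivWithin a b (g k) hy, hyU⟩
    refine ⟨h1.subset hsub, (Set.ncard_le_ncard hsub h1).trans h2, fun k hk hne => ?_⟩
    exact h3 k hk (hsub ⟨hk, hne⟩).2

/-- index control in arbitrary annuli -/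
lemma pl_index_general {a b c : ℝ} (hab : a < b) {f : ℝ → ℝ} {k₀ : ℤ}
    {cs : ℤ → ℝ} {g : ℤ → ℝ → ℝ} (h : IsPliableSeries a b c f k₀ cs g) (Q : ℝ) :
    ∃ (L N : ℕ) (K : ℝ), 0 < K ∧ ∀ ε : ℝ, 0 < ε → ∃ T : Set ℤ, T.Finite ∧ T.ncard ≤ N ∧
      ∀ k, k₀ ≤ k → ∀ x ∈ suppOn a b (g k), ε ≤ |x - c| → |x - c| ≤ Q * ε →
        k ∈ T ∧ (2 : ℝ) ^ (-(k : ℝ) * (L : ℝ)) ≤ K * ε := by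
  obtain ⟨L, hL, hidx⟩ := h.index_bound
  set δ := (b - a) / 4 with hδ
  have hδ0 : 0 < δ := by rw [hδ]; linarith
  -- finitely many indices far from `c`
  have hF0 : {k : ℤ | k₀ ≤ k ∧ (suppOn a b (g k) ∩ {x | δ ≤ |x - c|}).Nonempty}.Finite := by
    have hcomp : IsCompact (Icc a b ∩ {x | δ ≤ |x - c|}) :=
      isCompact_Icc.inter_right (isClosed_le continuous_const (by fun_prop))
    have hex : ∀ x ∈ Icc a b ∩ {x | δ ≤ |x - c|}, ∃ U ∈ 𝓝 x,
        {k : ℤ | k₀ ≤ k ∧ (suppOn a b (g k) ∩ U).Nonempty}.Finite := by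
      rintro x ⟨hx, hx2⟩
      apply h.supp_locFin x ⟨hx, ?_⟩
      rintro rfl
      simp at hx2
      linarith
    choose! U hU hUf using hex
    obtain ⟨t, ht, hcov⟩ := hcomp.elim_nhds_subcover U hU
    refine (t.finite_toSet.biUnion (fun x hx => hUf x (ht x hx))).subset ?_
    rintro k ⟨hk, x, hx, hx2⟩
    obtain ⟨y, hy, hxy⟩ := mem_iUnion₂.1 (hcov ⟨pl_supp_subset_Icc _ _ _ hx, hx2⟩)
    exact mem_iUnion₂.2 ⟨y, hy, hk, x, hx, hxy⟩
  set F0 := {k : ℤ | k₀ ≤ k ∧ (suppOn a b (g k) ∩ {x | δ ≤ |x - c|}).Nonempty} with hF0def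
  obtain ⟨n, hn⟩ := pow_unbounded_of_one_lt Q (one_lt_two (α := ℝ))
  refine ⟨L, F0.ncard + n * L, max (2 ^ n) ((2 : ℝ) ^ (-(k₀ : ℝ) * L) * Q / δ),
    lt_of_lt_of_le (by positivity) (le_max_left _ _), fun ε hε => ?_⟩
  let A : ℕ → Set ℤ := fun j => {k : ℤ | 2 * (2 ^ j * ε) < b - a ∧ k₀ ≤ k ∧ (suppOn a b (g k) ∩
      {x ∈ Set.Icc a b | 2 ^ j * ε ≤ |x - c| ∧ |x - c| ≤ 2 * (2 ^ j * ε)}).Nonempty}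
  have hA : ∀ j, (A j).Finite ∧ (A j).ncard ≤ L := by
    intro j
    by_cases hj : 2 * (2 ^ j * ε) < b - a
    · obtain ⟨h1, h2, -⟩ := hidx (2 ^ j * ε) (by positivity) hj
      simp only [A, hj, true_and]
      exact ⟨h1, h2⟩
    · simp [A, hj]
  refine ⟨F0 ∪ ⋃ j ∈ Finset.range n, A j,
    hF0.union ((Finset.range n).finite_toSet.biUnion fun j _ => (hA j).1), ?_, ?_⟩
  · refine (Set.ncard_union_le _ _).trans (Nat.add_le_add_left ?_ _)
    refine (Finset.set_ncard_biUnion_le _ _).trans ?_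
    refine (Finset.sum_le_card_nsmul _ _ L fun j _ => (hA j).2).trans ?_
    simp
  · intro k hk x hx hx1 hx2
    have hxI := pl_supp_subset_Icc _ _ _ hx
    by_cases hxδ : δ ≤ |x - c|
    · refine ⟨Or.inl ⟨hk, x, hx, hxδ⟩, ?_⟩
      have h1 : (2 : ℝ) ^ (-(k : ℝ) * L) ≤ (2 : ℝ) ^ (-(k₀ : ℝ) * L) := by
        apply Real.rpow_le_rpow_of_exponent_le one_le_two
        apply mul_le_mul_of_nonneg_right _ (Nat.cast_nonneg L)
        have : (k₀ : ℝ) ≤ k := by exact_mod_cast hk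
        linarith
      refine h1.trans ?_
      have h2 : 1 ≤ Q * ε / δ := (one_le_div hδ0).2 (hxδ.trans hx2)
      calc (2 : ℝ) ^ (-(k₀ : ℝ) * L) ≤ (2 : ℝ) ^ (-(k₀ : ℝ) * L) * (Q * ε / δ) :=
            le_mul_of_one_le_right (by positivity) h2
        _ = ((2 : ℝ) ^ (-(k₀ : ℝ) * L) * Q / δ) * ε := by ring
        _ ≤ _ := mul_le_mul_of_nonneg_right (le_max_right _ _) hε.le
    · push Not at hxδ
      obtain ⟨j, hj1, hj2⟩ := exists_nat_pow_near (x := |x - c| / ε) (y := (2 : ℝ))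
        ((one_le_div hε).2 hx1) one_lt_two
      rw [le_div_iff₀ hε] at hj1
      rw [div_lt_iff₀ hε] at hj2
      have hjn : j < n := by
        have : (2 : ℝ) ^ j < 2 ^ n := by
          have : (2 : ℝ) ^ j * ε ≤ Q * ε := hj1.trans hx2
          exact (le_of_mul_le_mul_right this hε).trans_lt hn
        exact (pow_lt_pow_iff_right₀ one_lt_two).1 this
      have hlt : 2 * (2 ^ j * ε) < b - a := by
        have : 4 * δ = b - a := by rw [hδ]; ring
        linarith
      have hne : (suppOn a b (g k) ∩
        {x ∈ Set.Icc a b | 2 ^ j * ε ≤ |x - c| ∧ |x - c| ≤ 2 * (2 ^ j * ε)}).Nonempty :=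
        ⟨x, hx, hxI, hj1, by rw [pow_succ] at hj2; linarith⟩
      refine ⟨Or.inr (mem_iUnion₂.2 ⟨j, Finset.mem_range.2 hjn, hlt, hk, hne⟩), ?_⟩
      refine ((hidx (2 ^ j * ε) (by positivity) hlt).2.2 k hk hne).trans ?_
      apply mul_le_mul_of_nonneg_right _ hε.le
      exact (pow_le_pow_right₀ one_le_two hjn.le).trans (le_max_left _ _)

lemma pl_supp_comp {a b a' b' : ℝ} {S : ℝ → ℝ} (hS : ContinuousOn S (Icc a' b'))
    (hmaps : MapsTo S (Icc a' b') (Icc a b)) (g p : ℝ → ℝ) {y : ℝ}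
    (hy : y ∈ suppOn a' b' (fun y => g (S y) * p y)) : y ∈ Icc a' b' ∧ S y ∈ suppOn a b g := by
  have hcl : IsClosed (Icc a' b' ∩ S ⁻¹' (suppOn a b g)) :=
    hS.preimage_isClosed_of_isClosed isClosed_Icc isClosed_closure
  have : suppOn a' b' (fun y => g (S y) * p y) ⊆ Icc a' b' ∩ S ⁻¹' (suppOn a b g) := by
    apply closure_minimal _ hcl
    rintro z ⟨hz, hne⟩
    exact ⟨hz, subset_closure ⟨hmaps hz, left_ne_zero_of_mul hne⟩⟩
  exact this hy

lemma pl_transform {a b c a' b' c' : ℝ} (hab : a < b) (hab' : a' < b') {S p : ℝ → ℝ}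
    (hS : ContDiffOn ℝ (⊤ : ℕ∞) S (Icc a' b')) (hmaps : MapsTo S (Icc a' b') (Icc a b))
    (hp : ContDiffOn ℝ (⊤ : ℕ∞) p (Icc a' b')) {m M : ℝ} (hm : 0 < m)
    (hlow : ∀ y ∈ Icc a' b', m * |y - c'| ≤ |S y - c|)
    (hup : ∀ y ∈ Icc a' b', |S y - c| ≤ M * |y - c'|)
    {f : ℝ → ℝ} {k₀ : ℤ}
    {cs : ℤ → ℝ} {g : ℤ → ℝ → ℝ} (h : IsPliableSeries a b c f k₀ cs g) :
    IsPliableSeries a' b' c' (fun y => f (S y) * p y) 1 (fun k => cs (k + (k₀ - 1)))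
      (fun k y => g (k + (k₀ - 1)) (S y) * p y) where
  sum_eq := by
    intro y hy
    have h1 := (h.sum_eq (S y) (hmaps hy)).mul_right (p y)
    let e : {k : ℤ // 1 ≤ k} ≃ {k : ℤ // k₀ ≤ k} :=
      (Equiv.addRight (k₀ - 1)).subtypeEquiv (fun k => by simp; omega)
    have h2 := e.hasSum_iff.2 h1
    have h3 : (fun k : {k : ℤ // 1 ≤ k} =>
        cs (k.val + (k₀ - 1)) * (g (k.val + (k₀ - 1)) (S y) * p y)) =
        (fun i : {k : ℤ // k₀ ≤ k} => cs i.val * g i.val (S y) * p y) ∘ e := by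
      funext k
      exact (mul_assoc _ _ _).symm
    rw [← h3] at h2
    exact h2
  cs_pos := fun k hk => h.cs_pos _ (by omega)
  cs_superexp := by
    intro γ
    have ht : Tendsto (fun k : ℤ => k + (k₀ - 1)) atTop atTop :=
      tendsto_atTop_add_const_right _ _ tendsto_id
    have h1 := ((h.cs_superexp γ).comp ht).const_mul ((2 : ℝ) ^ (-γ * ((k₀ - 1 : ℤ) : ℝ)))
    rw [mul_zero] at h1
    refine h1.congr fun k => ?_
    simp only [Function.comp]
    rw [← mul_assoc, ← Real.rpow_add two_pos]
    congr 2
    push_cast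
    ring
  g_smooth := fun k hk => ((h.g_smooth _ (by omega)).comp hS hmaps).mul hp
  supp_compact := fun k _ => pl_supp_compact a' b' _
  supp_subset := by
    intro k hk y hy
    obtain ⟨hyI, hSy⟩ := pl_supp_comp hS.continuousOn hmaps _ _ hy
    refine ⟨hyI, ?_⟩
    rintro rfl
    apply (h.supp_subset _ (by omega) hSy).2
    have := hup y hyI
    simp only [sub_self, abs_zero, mul_zero] at this
    exact sub_eq_zero.1 (abs_nonpos_iff.1 this)
  supp_locFin := by
    rintro y ⟨hy, hyc⟩
    have hne : S y ≠ c := by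
      intro he
      have := hlow y hy
      rw [he, sub_self, abs_zero] at this
      have h2 : 0 < m * |y - c'| := mul_pos hm (abs_pos.2 (sub_ne_zero.2 hyc))
      linarith
    obtain ⟨U, hU, hfin⟩ := h.supp_locFin (S y) ⟨hmaps hy, hne⟩
    obtain ⟨V, hV, hVU⟩ := mem_nhdsWithin_iff_exists_mem_nhds_inter.1 (hS.continuousOn y hy hU)
    refine ⟨V, hV, (hfin.preimage (f := fun k : ℤ => k + (k₀ - 1))
      (fun x _ z _ hxz => by simpa using hxz)).subset ?_⟩
    rintro k ⟨hk, z, hz, hzV⟩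
    obtain ⟨hzI, hSz⟩ := pl_supp_comp hS.continuousOn hmaps _ _ hz
    exact ⟨show k₀ ≤ k + (k₀ - 1) by omega, S z, hSz, hVU ⟨hzV, hzI⟩⟩
  norm_growth := by
    intro r
    obtain ⟨γ, B, hB⟩ := h.norm_growth r
    obtain ⟨C, hC, hCb⟩ := pl_CrNorm_comp hab hab' hS hmaps r p hp
    refine ⟨γ, (2 : ℝ) ^ (-γ * ((k₀ - 1 : ℤ) : ℝ)) * C * B, fun k hk => ?_⟩
    have h1 := hCb _ (h.g_smooth (k + (k₀ - 1)) (by omega))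
    have h2 := hB (k + (k₀ - 1)) (by omega)
    have h3 : (2 : ℝ) ^ (γ * (k : ℝ)) = (2 : ℝ) ^ (-γ * ((k₀ - 1 : ℤ) : ℝ)) *
        (2 : ℝ) ^ (γ * ((k + (k₀ - 1) : ℤ) : ℝ)) := by
      rw [← Real.rpow_add two_pos]
      congr 1
      push_cast
      ring
    calc _ ≤ (2 : ℝ) ^ (γ * (k : ℝ)) * (C * CrNorm r (g (k + (k₀ - 1))) (Icc a b)) :=
          mul_le_mul_of_nonneg_left h1 (by positivity)
      _ = (2 : ℝ) ^ (-γ * ((k₀ - 1 : ℤ) : ℝ)) * C * ((2 : ℝ) ^ (γ * ((k + (k₀ - 1) : ℤ) : ℝ)) *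
          CrNorm r (g (k + (k₀ - 1))) (Icc a b)) := by rw [h3]; ring
      _ ≤ _ := mul_le_mul_of_nonneg_left h2 (by positivity)
  index_bound := by
    obtain ⟨L, N, K, hK, hidx⟩ := pl_index_general hab h (2 * M / m)
    obtain ⟨t, ht⟩ := pow_unbounded_of_one_lt
      ((2 : ℝ) ^ (((k₀ - 1 : ℤ) : ℝ) * L) * (K * m)) (one_lt_two (α := ℝ))
    refine ⟨L + N + t + 1, by omega, fun ε hε _ => ?_⟩
    obtain ⟨T, hTf, hTc, hT⟩ := hidx (m * ε) (by positivity)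
    have key : ∀ k : ℤ, 1 ≤ k → (suppOn a' b' (fun y => g (k + (k₀ - 1)) (S y) * p y) ∩
        {x ∈ Set.Icc a' b' | ε ≤ |x - c'| ∧ |x - c'| ≤ 2 * ε}).Nonempty →
        k + (k₀ - 1) ∈ T ∧
          (2 : ℝ) ^ (-((k + (k₀ - 1) : ℤ) : ℝ) * (L : ℝ)) ≤ K * (m * ε) := by
      rintro k hk ⟨y, hy, hyI, hy1, hy2⟩
      obtain ⟨-, hSy⟩ := pl_supp_comp hS.continuousOn hmaps _ _ hy
      refine hT _ (by omega) (S y) hSy ?_ ?_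
      · exact (mul_le_mul_of_nonneg_left hy1 hm.le).trans (hlow y hyI)
      · have hM : 0 ≤ M := by
          have h1 := (abs_nonneg _).trans (hup y hyI)
          have h2 : 0 < |y - c'| := hε.trans_le hy1
          exact nonneg_of_mul_nonneg_left h1 h2
        calc |S y - c| ≤ M * |y - c'| := hup y hyI
          _ ≤ M * (2 * ε) := mul_le_mul_of_nonneg_left hy2 hM
          _ = 2 * M / m * (m * ε) := by field_simp
    have hinj : Function.Injective (fun k : ℤ => k + (k₀ - 1)) := fun x z hxz => by simpa using hxz
    have hsub : ∀ k ∈ {k : ℤ | 1 ≤ k ∧ (suppOn a' b' (fun y => g (k + (k₀ - 1)) (S y) * p y) ∩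
        {x ∈ Set.Icc a' b' | ε ≤ |x - c'| ∧ |x - c'| ≤ 2 * ε}).Nonempty}, k + (k₀ - 1) ∈ T :=
      fun k hk => (key k hk.1 hk.2).1
    refine ⟨(hTf.preimage (hinj.injOn)).subset hsub, ?_, ?_⟩
    · have := Set.ncard_le_ncard_of_injOn _ hsub hinj.injOn hTf
      omega
    · intro k hk hne
      have h1 := (key k hk hne).2
      have hk1 : (1 : ℝ) ≤ k := by exact_mod_cast hk
      have h2 : (2 : ℝ) ^ (-(k : ℝ) * ((L + N + t + 1 : ℕ) : ℝ)) ≤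
          (2 : ℝ) ^ (-((k + (k₀ - 1) : ℤ) : ℝ) * (L : ℝ)) *
            ((2 : ℝ) ^ (((k₀ - 1 : ℤ) : ℝ) * L) * (2 : ℝ) ^ (-(t : ℝ))) := by
        rw [← Real.rpow_add two_pos, ← Real.rpow_add two_pos]
        apply Real.rpow_le_rpow_of_exponent_le one_le_two
        push_cast
        have e1 : (0 : ℝ) ≤ (k - 1) * t := mul_nonneg (by linarith) (Nat.cast_nonneg t)
        have e2 : (0 : ℝ) ≤ k * N := mul_nonneg (by linarith) (Nat.cast_nonneg N)
        nlinarith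
      refine h2.trans ((mul_le_mul_of_nonneg_right h1 (by positivity)).trans ?_)
      have h3 : (2 : ℝ) ^ (-(t : ℝ)) = ((2 : ℝ) ^ t)⁻¹ := by
        rw [Real.rpow_neg two_pos.le, Real.rpow_natCast]
      rw [h3]
      calc K * (m * ε) * ((2 : ℝ) ^ (((k₀ - 1 : ℤ) : ℝ) * L) * ((2 : ℝ) ^ t)⁻¹)
          = (((2 : ℝ) ^ (((k₀ - 1 : ℤ) : ℝ) * L) * (K * m)) * ((2 : ℝ) ^ t)⁻¹) * ε := by ring
        _ ≤ 1 * ε := by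
          apply mul_le_mul_of_nonneg_right _ hε.le
          rw [← div_eq_mul_inv]
          exact (div_le_one (by positivity)).2 ht.le
        _ = ε := one_mul ε

lemma pl_congr {a b c : ℝ} {f f' : ℝ → ℝ} (h : Pliable a b c f) (hE : EqOn f f' (Icc a b)) :
    Pliable a b c f' := by
  obtain ⟨k₀, cs, g, h⟩ := h
  exact ⟨k₀, cs, g, { h with sum_eq := fun x hx => by rw [← hE hx]; exact h.sum_eq x hx }⟩

lemma pl_lipschitz {a b c : ℝ} (hcI : c ∈ Icc a b) {f : ℝ → ℝ}
    (hf : ContDiffOn ℝ (⊤ : ℕ∞) f (Icc a b)) :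
    ∃ M : ℝ, 0 < M ∧ ∀ x ∈ Icc a b, |f x - f c| ≤ M * |x - c| := by
  obtain ⟨K, hK⟩ := hf.exists_lipschitzOnWith (by simp) (convex_Icc a b) isCompact_Icc
  refine ⟨K + 1, by positivity, fun x hx => ?_⟩
  have := hK.dist_le_mul x hx c hcI
  rw [Real.dist_eq, Real.dist_eq] at this
  nlinarith [abs_nonneg (x - c)]

open Real in
/-- Lemma 4.2 of the paper. Suppose `f` is pliable at the endpoint `c` of
`J = [a,b]` and `φ ∈ (-π/2, π/2)` is such that the rotated graph function `f_φ` is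
defined, i.e. `R : x ↦ x cos φ - f x sin φ` is strictly increasing on `J` and
`f_φ ∈ C^∞(R(J))` satisfies `f_φ (R x) = x sin φ + f x cos φ` on `J` (note
`R(J) = [R a, R b]`). Then `f_φ''` is pliable at `R c`, and if `φ ≠ 0` then `f_φ'` is
not pliable at `R c`. -/
theorem stmt14 (a b c : ℝ) (hab : a < b) (hc : c = a ∨ c = b)
    (f : ℝ → ℝ) (hfsm : ContDiffOn ℝ (⊤ : ℕ∞) f (Set.Icc a b))
    (hfpl : Pliable a b c f)
    (φ : ℝ) (hφ : φ ∈ Set.Ioo (-(π / 2)) (π / 2))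
    (hR : StrictMonoOn (fun x => x * Real.cos φ - f x * Real.sin φ) (Set.Icc a b))
    (fφ : ℝ → ℝ)
    (hfφsm : ContDiffOn ℝ (⊤ : ℕ∞) fφ
      (Set.Icc (a * Real.cos φ - f a * Real.sin φ) (b * Real.cos φ - f b * Real.sin φ)))
    (hfφ : ∀ x ∈ Set.Icc a b,
      fφ (x * Real.cos φ - f x * Real.sin φ) = x * Real.sin φ + f x * Real.cos φ) :
    Pliable (a * Real.cos φ - f a * Real.sin φ) (b * Real.cos φ - f b * Real.sin φ)
      (c * Real.cos φ - f c * Real.sin φ)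
      (iteratedDerivWithin 2 fφ
        (Set.Icc (a * Real.cos φ - f a * Real.sin φ) (b * Real.cos φ - f b * Real.sin φ))) ∧
    (φ ≠ 0 →
      ¬ Pliable (a * Real.cos φ - f a * Real.sin φ) (b * Real.cos φ - f b * Real.sin φ)
        (c * Real.cos φ - f c * Real.sin φ)
        (derivWithin fφ
          (Set.Icc (a * Real.cos φ - f a * Real.sin φ)
            (b * Real.cos φ - f b * Real.sin φ)))) := by
  set C := Real.cos φ with hCdef
  set s := Real.sin φ with hsdef
  have hcs : C ^ 2 + s ^ 2 = 1 := Real.cos_sq_add_sin_sq φ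
  have haI : a ∈ Icc a b := ⟨le_rfl, hab.le⟩
  have hbI : b ∈ Icc a b := ⟨hab.le, le_rfl⟩
  have hcI : c ∈ Icc a b := by rcases hc with rfl | rfl <;> assumption
  set a' := a * C - f a * s with ha'
  set b' := b * C - f b * s with hb'
  set c' := c * C - f c * s with hc'
  have hab' : a' < b' := hR haI hbI hab
  have hRmaps : ∀ x ∈ Icc a b, x * C - f x * s ∈ Icc a' b' := fun x hx =>
    ⟨hR.monotoneOn haI hx hx.1, hR.monotoneOn hx hbI hx.2⟩
  have hc'I : c' ∈ Icc a' b' := hRmaps c hcI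
  have hRsm : ContDiffOn ℝ (⊤ : ℕ∞) (fun x => x * C - f x * s) (Icc a b) :=
    (contDiffOn_id.mul contDiffOn_const).sub (hfsm.mul contDiffOn_const)
  have hsurj : ∀ y ∈ Icc a' b', ∃ x ∈ Icc a b, x * C - f x * s = y := fun y hy =>
    intermediate_value_Icc hab.le hRsm.continuousOn hy
  let S : ℝ → ℝ := fun y => y * C + fφ y * s
  have hSR : ∀ x ∈ Icc a b, S (x * C - f x * s) = x := by
    intro x hx
    simp only [S]
    rw [hfφ x hx]
    linear_combination x * hcs
  have hSsm : ContDiffOn ℝ (⊤ : ℕ∞) S (Icc a' b') :=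
    (contDiffOn_id.mul contDiffOn_const).add (hfφsm.mul contDiffOn_const)
  have hSmaps : MapsTo S (Icc a' b') (Icc a b) := by
    intro y hy
    obtain ⟨x, hx, rfl⟩ := hsurj y hy
    rw [hSR x hx]
    exact hx
  have hRS : ∀ y ∈ Icc a' b', S y * C - f (S y) * s = y := by
    intro y hy
    obtain ⟨x, hx, rfl⟩ := hsurj y hy
    rw [hSR x hx]
  have hfS : ∀ y ∈ Icc a' b', f (S y) = fφ y * C - y * s := by
    intro y hy
    obtain ⟨x, hx, rfl⟩ := hsurj y hy
    rw [hSR x hx, hfφ x hx]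
    linear_combination (-f x) * hcs
  have hSc : S c' = c := hSR c hcI
  -- first derivative relations
  have hD : ∀ y ∈ Icc a' b', HasDerivWithinAt fφ (derivWithin fφ (Icc a' b') y) (Icc a' b') y :=
    fun y hy => (hfφsm.differentiableOn (by simp) y hy).hasDerivWithinAt
  have hSd : ∀ y ∈ Icc a' b',
      HasDerivWithinAt S (C + derivWithin fφ (Icc a' b') y * s) (Icc a' b') y := by
    intro y hy
    have := ((hasDerivWithinAt_id y (Icc a' b')).mul_const C).add ((hD y hy).mul_const s)
    rw [one_mul] at this
    exact this
  have hrel1 : ∀ y ∈ Icc a' b',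
      derivWithin f (Icc a b) (S y) * (C + derivWithin fφ (Icc a' b') y * s) =
        derivWithin fφ (Icc a' b') y * C - s := by
    intro y hy
    have e1 := ((hfsm.differentiableOn (by simp)) _ (hSmaps hy)).hasDerivWithinAt.comp y
      (hSd y hy) hSmaps
    have e2 := ((hD y hy).mul_const C).sub ((hasDerivWithinAt_id y (Icc a' b')).mul_const s)
    rw [one_mul] at e2
    have e3 := e2.congr (f₁ := f ∘ S) (fun z hz => hfS z hz) (hfS y hy)
    exact (uniqueDiffOn_Icc hab' y hy).eq_deriv _ e1 e3
  obtain ⟨k₀, cs, g, hser⟩ := hfpl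
  constructor
  · -- second derivative
    have hf' := pl_smooth_deriv hab hfsm
    have hfφ' := pl_smooth_deriv hab' hfφsm
    have hpsm : ContDiffOn ℝ (⊤ : ℕ∞)
        (fun y => (C + derivWithin fφ (Icc a' b') y * s) ^ 3) (Icc a' b') :=
      (contDiffOn_const.add (hfφ'.mul contDiffOn_const)).pow 3
    have hser2 := pl_deriv_series hab hcI (pl_deriv_series hab hcI hser)
    obtain ⟨M, hM, hup⟩ := pl_lipschitz hc'I hSsm
    obtain ⟨M', hM', hlow⟩ := pl_lipschitz hcI hRsm
    rw [hSc] at hup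
    have hlow' : ∀ y ∈ Icc a' b', M'⁻¹ * |y - c'| ≤ |S y - c| := by
      intro y hy
      have := hlow (S y) (hSmaps hy)
      simp only [hRS y hy] at this
      rw [inv_mul_le_iff₀ hM']
      exact this
    have hpl := pl_transform hab hab' hSsm hSmaps hpsm (inv_pos.2 hM') hlow' hup hser2
    refine pl_congr ⟨_, _, _, hpl⟩ ?_
    intro y hy
    have hD2 := (hfφ'.differentiableOn (by simp) y hy).hasDerivWithinAt
    have e1 := ((hf'.differentiableOn (by simp)) _ (hSmaps hy)).hasDerivWithinAt.comp y
      (hSd y hy) hSmaps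
    have e2 := e1.mul ((hD2.mul_const s).const_add C)
    have e3 := (hD2.mul_const C).sub_const s
    have e4 := e3.congr (f₁ := (derivWithin f (Icc a b) ∘ S) *
      (fun y => C + derivWithin fφ (Icc a' b') y * s)) (fun z hz => hrel1 z hz) (hrel1 y hy)
    have e5 := (uniqueDiffOn_Icc hab' y hy).eq_deriv _ e2 e4
    have e6 : iteratedDerivWithin 2 fφ (Icc a' b') y =
        derivWithin (derivWithin fφ (Icc a' b')) (Icc a' b') y := by
      rw [iteratedDerivWithin_succ', iteratedDerivWithin_one]
    rw [e6]
    have e7 := hrel1 y hy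
    simp only [Function.comp] at e5 ⊢
    set D := derivWithin fφ (Icc a' b') y
    set D' := derivWithin (derivWithin fφ (Icc a' b')) (Icc a' b') y
    set F := derivWithin f (Icc a b) (S y)
    set F' := derivWithin (derivWithin f (Icc a b)) (Icc a b) (S y)
    linear_combination (C + D * s) * e5 - D' * s * e7 + D' * hcs
  · intro hφ0 hpl
    have h0 : derivWithin fφ (Icc a' b') c' = 0 := pl_value_zero hc'I hpl
    have h1 := hrel1 c' hc'I
    rw [hSc, pl_deriv_at_c hab hcI hser, h0] at h1
    have hs0 : s = 0 := by linarith
    apply hφ0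
    exact (Real.sin_eq_zero_iff_of_lt_of_lt (by linarith [hφ.1, Real.pi_pos])
      (by linarith [hφ.2, Real.pi_pos])).1 hs0
end
end
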